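/- Let s ≥ 0 be an integer. There exists a constant C > 0, depending only on s, such that for every R ≥ 1 and every smooth divergence-free vector field u : ℝ³ → ℝ³ with finite uniformly local Sobolev norm ‖u‖_{H^s_ul} := ∑_{|β| ≤ s} sup_{x ∈ ℝ³} ‖D^β u‖_{L²(B_1(x))}, the stream function ψ(x) = − ∫₀¹ τ (x × u(τx)) dτ satisfies ∑_{|α| ≤ s} ‖D^α ψ‖_{L²(B_R(0))} ≤ C R^{5/2} ‖u‖_{H^s_ul}. -/

import Mathlib

open MeasureTheory Metric
open scoped ENNReal

noncomputable section

/-- Abbreviation for three-dimensional Euclidean space. -/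
abbrev E3 := EuclideanSpace ℝ (Fin 3)

/-- The partial derivative in the `i`-th coordinate direction. -/
def pd {F : Type*} [NormedAddCommGroup F] [NormedSpace ℝ F]
    (i : Fin 3) (f : E3 → F) : E3 → F :=
  fun x => fderiv ℝ f x (EuclideanSpace.single i 1)

/-- The divergence `∂₁u¹ + ∂₂u² + ∂₃u³` of a vector field on `ℝ³`. -/
def divg (u : E3 → E3) : E3 → ℝ :=
  fun x => ∑ i, pd i (fun y => u y i) x

/-- The curl `(∂₂v³ − ∂₃v², ∂₃v¹ − ∂₁v³, ∂₁v² − ∂₂v¹)` of a vector field on `ℝ³`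
(with `0`-based indices). -/
def curl3 (v : E3 → E3) : E3 → E3 :=
  fun x => (WithLp.equiv 2 (Fin 3 → ℝ)).symm
    ![pd 1 (fun y => v y 2) x - pd 2 (fun y => v y 1) x,
      pd 2 (fun y => v y 0) x - pd 0 (fun y => v y 2) x,
      pd 0 (fun y => v y 1) x - pd 1 (fun y => v y 0) x]

/-- The cross product on `ℝ³`. -/
def cross3 (a b : E3) : E3 :=
  (WithLp.equiv 2 (Fin 3 → ℝ)).symm
    ![a 1 * b 2 - a 2 * b 1, a 2 * b 0 - a 0 * b 2, a 0 * b 1 - a 1 * b 0]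

/-- The stream function `ψ(x) = − ∫₀¹ τ (x × u(τx)) dτ` of Lemma 2.13. -/
def streamFun (u : E3 → E3) : E3 → E3 :=
  fun x => - ∫ τ in (0:ℝ)..1, τ • cross3 x (u (τ • x))

/-- The partial derivative `D^α` associated with a multi-index `α`. -/
def Dm {F : Type*} [NormedAddCommGroup F] [NormedSpace ℝ F]
    (α : Fin 3 → ℕ) (f : E3 → F) : E3 → F :=
  (List.finRange 3).foldr (fun i g => (pd i)^[α i] g) f

/-- The finite set of multi-indices `α` on `ℝ³` with `|α| ≤ s`. -/
def mSet (s : ℕ) : Finset (Fin 3 → ℕ) :=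
  (Finset.Iic (fun _ => s : Fin 3 → ℕ)).filter fun α => (∑ i, α i) ≤ s

/-- The uniformly local Sobolev norm `‖f‖_{H^s_ul} = ∑_{|α| ≤ s} sup_x ‖D^α f‖_{L²(B₁(x))}`. -/
def ulSobolev (s : ℕ) {F : Type*} [NormedAddCommGroup F] [NormedSpace ℝ F]
    (f : E3 → F) : ℝ≥0∞ :=
  ∑ α ∈ mSet s, ⨆ x : E3, eLpNorm (Dm α f) 2 (volume.restrict (ball x 1))

/-!
Write `ψ(x) = −x × w(x)` with the radial average `w(x) = ∫₀¹ τ u(τx) dτ`. Each derivative of `w` is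
again a radial average, `Dⁿw(x) = ∫₀¹ τ^(n+1) (Dⁿu)(τx) dτ`. The dilation by `τ` maps `B_R` into
itself and costs `τ^(-3/2)` in `L²(B_R)`, so Minkowski's integral inequality bounds `‖Dⁿw‖` by
`‖Dⁿu‖` in `L²(B_R)`, which is `O(R^(3/2))` times its supremum over unit balls. As `x` is linear,
at most two terms survive in the Leibniz rule for `x × w`, and they cost one further factor `R`.
-/

section RadialAverage

variable {E F G : Type*} [NormedAddCommGroup E] [NormedSpace ℝ E] [NormedAddCommGroup F]
  [NormedSpace ℝ F] [NormedAddCommGroup G] [NormedSpace ℝ G]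

/-- The weighted radial average `x ↦ ∫₀¹ τ ^ k g(τ x) dτ`. -/
def radialAvg (k : ℕ) (g : E → F) : E → F :=
  fun x => ∫ τ in (0:ℝ)..1, τ ^ k • g (τ • x)

lemma intervalIntegrable_pow_smul_comp_smul {g : E → F} (hg : Continuous g) (k : ℕ) (x : E) :
    IntervalIntegrable (fun τ : ℝ => τ ^ k • g (τ • x)) volume 0 1 :=
  Continuous.intervalIntegrable (by fun_prop) _ _

lemma map_radialAvg [CompleteSpace F] [CompleteSpace G] (L : F →L[ℝ] G) {g : E → F}
    (hg : Continuous g) (k : ℕ) (x : E) :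
    L (radialAvg k g x) = radialAvg k (fun y => L (g y)) x := by
  simp only [radialAvg, ← map_smul]
  exact (L.intervalIntegral_comp_comm (intervalIntegrable_pow_smul_comp_smul hg k x)).symm

lemma continuous_radialAvg {g : E → F} (hg : Continuous g) (k : ℕ) :
    Continuous (radialAvg k g) :=
  intervalIntegral.continuous_parametric_intervalIntegral_of_continuous' (by fun_prop) 0 1

variable [ProperSpace E]

lemma hasFDerivAt_radialAvg {g : E → F} (hg : ContDiff ℝ 1 g) (k : ℕ) (x : E) :
    HasFDerivAt (radialAvg k g) (radialAvg (k + 1) (fderiv ℝ g) x) x := by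
  have hg' : Continuous (fderiv ℝ g) := hg.continuous_fderiv one_ne_zero
  obtain ⟨M, hM⟩ := (isCompact_closedBall (0 : E) (‖x‖ + 1)).exists_bound_of_continuousOn
    hg'.continuousOn
  refine intervalIntegral.hasFDerivAt_integral_of_dominated_of_fderiv_le
    (F := fun x τ => τ ^ k • g (τ • x)) (F' := fun x τ => τ ^ (k + 1) • fderiv ℝ g (τ • x))
    (bound := fun _ => M) (ball_mem_nhds x one_pos)
    (.of_forall fun y => Continuous.aestronglyMeasurable (by fun_prop))
    (intervalIntegrable_pow_smul_comp_smul hg.continuous k x)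
    (Continuous.aestronglyMeasurable (by fun_prop))
    (.of_forall fun τ hτ y hy => ?_) intervalIntegrable_const (.of_forall fun τ _ y _ => ?_)
  · obtain ⟨hτ0, hτ1⟩ : 0 < τ ∧ τ ≤ 1 := by rwa [Set.uIoc_of_le zero_le_one] at hτ
    have hτy : τ • y ∈ closedBall (0 : E) (‖x‖ + 1) := by
      have hy' : ‖y‖ < ‖x‖ + 1 := by
        linarith [norm_le_norm_add_norm_sub x y, mem_ball_iff_norm'.1 hy]
      rw [mem_closedBall_zero_iff, norm_smul, Real.norm_of_nonneg hτ0.le]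
      nlinarith [norm_nonneg y]
    rw [norm_smul, norm_pow, Real.norm_of_nonneg hτ0.le]
    exact (mul_le_of_le_one_left (norm_nonneg _) (pow_le_one₀ hτ0.le hτ1)).trans (hM _ hτy)
  · have hcomp := ((hg.differentiable one_ne_zero (τ • y)).hasFDerivAt.comp y
      ((hasFDerivAt_id y).const_smul τ)).const_smul (τ ^ k)
    convert! hcomp using 1
    ext v
    simp [pow_succ, smul_smul]

variable [CompleteSpace F]

lemma hasFTaylorSeriesUpTo_radialAvg {n : ℕ∞} {g : E → F} (hg : ContDiff ℝ n g) (k : ℕ) :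
    HasFTaylorSeriesUpTo n (radialAvg k g)
      fun x m => radialAvg (k + m) (iteratedFDeriv ℝ m g) x where
  zero_eq x := map_radialAvg
    (continuousMultilinearCurryFin0 ℝ E F).toContinuousLinearEquiv.toContinuousLinearMap
    (hg.continuous_iteratedFDeriv (m := 0) (by simp)) k x
  fderiv m hm x := by
    have hm' : ((m + 1 : ℕ) : WithTop ℕ∞) ≤ n := by
      exact_mod_cast Order.add_one_le_of_lt (show (m : ℕ∞) < n by exact_mod_cast hm)
    have hD : ContDiff ℝ 1 (iteratedFDeriv ℝ m g) :=
      hg.iteratedFDeriv_right (by rwa [add_comm 1, ← Nat.cast_succ])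
    have hcurry := map_radialAvg (G := E →L[ℝ] (E [×m]→L[ℝ] F))
      (continuousMultilinearCurryLeftEquiv ℝ (fun _ : Fin (m + 1) => E)
        F).toContinuousLinearEquiv.toContinuousLinearMap
      (hg.continuous_iteratedFDeriv hm') (k + (m + 1)) x
    exact (hasFDerivAt_radialAvg hD (k + m) x).congr_fderiv hcurry.symm
  cont m hm := continuous_radialAvg (hg.continuous_iteratedFDeriv hm) (k + m)

lemma contDiff_radialAvg {n : ℕ∞} {g : E → F} (hg : ContDiff ℝ n g) (k : ℕ) :
    ContDiff ℝ n (radialAvg k g) :=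
  (hasFTaylorSeriesUpTo_radialAvg hg k).contDiff

lemma iteratedFDeriv_radialAvg {n : ℕ} {g : E → F} (hg : ContDiff ℝ n g) (k : ℕ) :
    iteratedFDeriv ℝ n (radialAvg k g) = radialAvg (k + n) (iteratedFDeriv ℝ n g) :=
  funext fun x => ((hasFTaylorSeriesUpTo_radialAvg (n := n) hg k).eq_iteratedFDeriv le_rfl x).symm

end RadialAverage

section Leibniz

variable {E F G : Type*} [NormedAddCommGroup E] [NormedSpace ℝ E] [NormedAddCommGroup F]
  [NormedSpace ℝ F] [NormedAddCommGroup G] [NormedSpace ℝ G]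

lemma iteratedFDeriv_id_add_two (n : ℕ) (x : E) :
    iteratedFDeriv ℝ (n + 2) (fun y : E => y) x = 0 := by
  have hfderiv : fderiv ℝ (fun y : E => y) = fun _ => ContinuousLinearMap.id ℝ E :=
    funext fun _ => fderiv_fun_id
  rw [← norm_eq_zero, ← norm_iteratedFDeriv_fderiv, hfderiv, iteratedFDeriv_succ_const,
    Pi.zero_apply, norm_zero]

lemma norm_iteratedFDeriv_id_one_le (x : E) : ‖iteratedFDeriv ℝ 1 (fun y : E => y) x‖ ≤ 1 := by
  rw [← zero_add 1, ← norm_iteratedFDeriv_fderiv, norm_iteratedFDeriv_zero, fderiv_fun_id]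
  exact ContinuousLinearMap.norm_id_le

lemma norm_iteratedFDeriv_bilinear_id_le (B : E →L[ℝ] F →L[ℝ] G) {n : ℕ} {w : E → F}
    (hw : ContDiff ℝ n w) (x : E) :
    ‖iteratedFDeriv ℝ n (fun y => B y (w y)) x‖ ≤
      ‖B‖ * (‖x‖ * ‖iteratedFDeriv ℝ n w x‖ + n * ‖iteratedFDeriv ℝ (n - 1) w x‖) := by
  refine (B.norm_iteratedFDeriv_le_of_bilinear contDiff_fun_id hw x le_rfl).trans ?_
  gcongr
  rcases n with - | n
  · simp
  · rw [Finset.sum_range_succ', Finset.sum_range_succ', Finset.sum_eq_zero fun i _ => by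
      rw [iteratedFDeriv_id_add_two, norm_zero, mul_zero, zero_mul], zero_add, add_comm]
    gcongr ?_ + ?_
    · simp
    · rw [zero_add, Nat.choose_one_right]
      gcongr
      exact mul_le_of_le_one_right (Nat.cast_nonneg _) (norm_iteratedFDeriv_id_one_le x)

lemma eLpNorm_iteratedFDeriv_bilinear_id_le [MeasurableSpace E] [BorelSpace E]
    (μ : Measure E) (B : E →L[ℝ] F →L[ℝ] G) {n : ℕ} {w : E → F}
    (hw : ContDiff ℝ n w) {p : ℝ≥0∞} (hp : 1 ≤ p) {R : ℝ} (hR : 0 ≤ R) :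
    eLpNorm (iteratedFDeriv ℝ n fun y => B y (w y)) p (μ.restrict (ball 0 R)) ≤
      ENNReal.ofReal (‖B‖ * R) * eLpNorm (iteratedFDeriv ℝ n w) p (μ.restrict (ball 0 R)) +
      ENNReal.ofReal (‖B‖ * n) *
        eLpNorm (iteratedFDeriv ℝ (n - 1) w) p (μ.restrict (ball 0 R)) := by
  have hcont {m : ℕ} (hm : m ≤ n) : Continuous fun x => ‖iteratedFDeriv ℝ m w x‖ :=
    (hw.continuous_iteratedFDeriv (by exact_mod_cast hm)).norm
  have hbound : ∀ᵐ x ∂μ.restrict (ball 0 R), ‖iteratedFDeriv ℝ n (fun y => B y (w y)) x‖ ≤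
      ((‖B‖ * R) • (fun x => ‖iteratedFDeriv ℝ n w x‖) +
        (‖B‖ * n) • fun x => ‖iteratedFDeriv ℝ (n - 1) w x‖) x := by
    refine (ae_restrict_iff' measurableSet_ball).2 (.of_forall fun x hx => ?_)
    calc ‖iteratedFDeriv ℝ n (fun y => B y (w y)) x‖
        ≤ ‖B‖ * (‖x‖ * ‖iteratedFDeriv ℝ n w x‖ + n * ‖iteratedFDeriv ℝ (n - 1) w x‖) :=
          norm_iteratedFDeriv_bilinear_id_le B hw x
      _ ≤ ‖B‖ * (R * ‖iteratedFDeriv ℝ n w x‖ + n * ‖iteratedFDeriv ℝ (n - 1) w x‖) := by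
          gcongr
          exact (mem_ball_zero_iff.1 hx).le
      _ = _ := by
          simp only [Pi.add_apply, Pi.smul_apply, smul_eq_mul]
          ring
  refine (eLpNorm_mono_ae_real hbound).trans ((eLpNorm_add_le
    ((hcont le_rfl).const_smul _).aestronglyMeasurable
    ((hcont (Nat.sub_le n 1)).const_smul _).aestronglyMeasurable hp).trans_eq ?_)
  rw [eLpNorm_const_smul, eLpNorm_const_smul, eLpNorm_norm, eLpNorm_norm,
    Real.enorm_of_nonneg (by positivity), Real.enorm_of_nonneg (by positivity)]

end Leibniz

section Minkowski

variable {α β : Type*} [MeasurableSpace α] [MeasurableSpace β]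

lemma eLpNorm_two_sq {ε : Type*} [ENorm ε] (f : α → ε) (μ : Measure α) :
    eLpNorm f 2 μ ^ 2 = ∫⁻ x, ‖f x‖ₑ ^ 2 ∂μ := by
  simpa using eLpNorm_nnreal_pow_eq_lintegral (f := f) (μ := μ) (p := 2) two_ne_zero

lemma lintegral_mul_le_eLpNorm_two_mul {μ : Measure α} {f g : α → ℝ≥0∞}
    (hf : AEMeasurable f μ) (hg : AEMeasurable g μ) :
    ∫⁻ x, f x * g x ∂μ ≤ eLpNorm f 2 μ * eLpNorm g 2 μ := by
  have h := ENNReal.lintegral_mul_le_Lp_mul_Lq μ Real.HolderConjugate.two_two hf hg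
  simpa [eLpNorm_eq_lintegral_rpow_enorm_toReal] using h

-- After squaring, this is Cauchy-Schwarz applied to each pair of slices `f t`, `f r`.
lemma eLpNorm_two_lintegral_le {μ : Measure α} {ν : Measure β} [SFinite μ] [SFinite ν]
    {f : β → α → ℝ≥0∞} (hf : Measurable (Function.uncurry f)) :
    eLpNorm (fun x => ∫⁻ t, f t x ∂ν) 2 μ ≤ ∫⁻ t, eLpNorm (f t) 2 μ ∂ν := by
  have hfx (x : α) : Measurable fun t => f t x := hf.comp measurable_prodMk_right
  have hft (t : β) : Measurable (f t) := hf.comp measurable_prodMk_left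
  have hnorm : Measurable fun t => eLpNorm (f t) 2 μ := by
    simp only [eLpNorm_eq_lintegral_rpow_enorm_toReal two_ne_zero ENNReal.ofNat_ne_top,
      enorm_eq_self]
    exact (hf.pow_const _).lintegral_prod_right'.pow_const _
  have sq_lintegral {h : β → ℝ≥0∞} (hh : Measurable h) :
      (∫⁻ t, h t ∂ν) ^ 2 = ∫⁻ t, ∫⁻ r, h t * h r ∂ν ∂ν := by
    simp_rw [lintegral_const_mul _ hh, lintegral_mul_const _ hh, sq]
  rw [← ENNReal.pow_le_pow_left_iff two_ne_zero, eLpNorm_two_sq]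
  simp only [enorm_eq_self]
  calc ∫⁻ x, (∫⁻ t, f t x ∂ν) ^ 2 ∂μ
      = ∫⁻ x, ∫⁻ t, ∫⁻ r, f t x * f r x ∂ν ∂ν ∂μ := by simp_rw [sq_lintegral (hfx _)]
    _ = ∫⁻ t, ∫⁻ x, ∫⁻ r, f t x * f r x ∂ν ∂μ ∂ν :=
      lintegral_lintegral_swap (by fun_prop)
    _ = ∫⁻ t, ∫⁻ r, ∫⁻ x, f t x * f r x ∂μ ∂ν ∂ν :=
      lintegral_congr fun t => lintegral_lintegral_swap (by fun_prop)
    _ ≤ ∫⁻ t, ∫⁻ r, eLpNorm (f t) 2 μ * eLpNorm (f r) 2 μ ∂ν ∂ν :=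
      lintegral_mono fun t => lintegral_mono fun r =>
        lintegral_mul_le_eLpNorm_two_mul (hft t).aemeasurable (hft r).aemeasurable
    _ = (∫⁻ t, eLpNorm (f t) 2 μ ∂ν) ^ 2 := (sq_lintegral hnorm).symm

end Minkowski

section Dilation

variable {E F : Type*} [NormedAddCommGroup E] [NormedSpace ℝ E] [FiniteDimensional ℝ E]
  [MeasurableSpace E] [BorelSpace E] (μ : Measure E) [μ.IsAddHaarMeasure] [NormedAddCommGroup F]

lemma map_smul_restrict_ball_le (R : ℝ) {τ : ℝ} (hτ0 : 0 < τ) (hτ1 : τ ≤ 1) :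
    (μ.restrict (ball 0 R)).map (τ • ·) ≤
      ENNReal.ofReal (τ ^ Module.finrank ℝ E)⁻¹ • μ.restrict (ball 0 R) := by
  have hball : ball (0 : E) R ⊆ (τ • ·) ⁻¹' ball (0 : E) R := fun x hx => by
    rw [Set.mem_preimage, mem_ball_zero_iff, norm_smul, Real.norm_of_nonneg hτ0.le]
    exact (mul_le_of_le_one_left (norm_nonneg x) hτ1).trans_lt (mem_ball_zero_iff.1 hx)
  calc (μ.restrict (ball 0 R)).map (τ • ·)
      ≤ (μ.restrict ((τ • ·) ⁻¹' ball 0 R)).map (τ • ·) :=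
        Measure.map_mono (Measure.restrict_mono hball le_rfl) (by fun_prop)
    _ = (μ.map (τ • ·)).restrict (ball 0 R) :=
        (Measure.restrict_map (by fun_prop) measurableSet_ball).symm
    _ = _ := by
      rw [Measure.map_addHaar_smul μ hτ0.ne', abs_of_pos (by positivity), Measure.restrict_smul]

lemma eLpNorm_comp_smul_ball_le {g : E → F} (hg : Continuous g) (p : ℝ≥0∞) (R : ℝ) {τ : ℝ}
    (hτ0 : 0 < τ) (hτ1 : τ ≤ 1) :
    eLpNorm (fun x => g (τ • x)) p (μ.restrict (ball 0 R)) ≤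
      ENNReal.ofReal (τ ^ (-(Module.finrank ℝ E / p.toReal))) *
        eLpNorm g p (μ.restrict (ball 0 R)) := by
  have hτd : 0 < (τ ^ Module.finrank ℝ E)⁻¹ := by positivity
  calc eLpNorm (fun x => g (τ • x)) p (μ.restrict (ball 0 R))
      = eLpNorm g p ((μ.restrict (ball 0 R)).map (τ • ·)) :=
        (eLpNorm_map_measure hg.aestronglyMeasurable (by fun_prop)).symm
    _ ≤ eLpNorm g p (ENNReal.ofReal (τ ^ Module.finrank ℝ E)⁻¹ • μ.restrict (ball 0 R)) :=
        eLpNorm_mono_measure g (map_smul_restrict_ball_le μ R hτ0 hτ1)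
    _ = _ := by
      rw [eLpNorm_smul_measure_of_ne_zero (ENNReal.ofReal_pos.2 hτd).ne', smul_eq_mul,
        ENNReal.ofReal_rpow_of_pos hτd, ← Real.rpow_natCast, ← Real.rpow_neg hτ0.le,
        ← Real.rpow_mul hτ0.le, one_div, ENNReal.toReal_inv, neg_mul, div_eq_mul_inv]

lemma lintegral_rpow_Ioc_zero_one {a : ℝ} (ha : -1 < a) :
    ∫⁻ τ in Set.Ioc (0:ℝ) 1, ENNReal.ofReal (τ ^ a) = ENNReal.ofReal (a + 1)⁻¹ := by
  have hint : IntervalIntegrable (fun τ : ℝ => τ ^ a) volume 0 1 :=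
    intervalIntegral.intervalIntegrable_rpow' ha
  rw [← ofReal_integral_eq_lintegral_ofReal
    ((intervalIntegrable_iff_integrableOn_Ioc_of_le zero_le_one).1 hint)
    ((ae_restrict_iff' measurableSet_Ioc).2 (.of_forall fun τ hτ => Real.rpow_nonneg hτ.1.le _)),
    ← intervalIntegral.integral_of_le zero_le_one, integral_rpow (Or.inl ha), Real.one_rpow,
    Real.zero_rpow (by linarith), sub_zero, one_div]

lemma eLpNorm_radialAvg_le [NormedSpace ℝ F] {g : E → F} (hg : Continuous g) {k : ℕ}
    (hk : Module.finrank ℝ E < 2 * (k + 1)) (R : ℝ) :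
    eLpNorm (radialAvg k g) 2 (μ.restrict (ball 0 R)) ≤
      ENNReal.ofReal (k - Module.finrank ℝ E / 2 + 1)⁻¹ * eLpNorm g 2 (μ.restrict (ball 0 R)) := by
  have ha : -1 < (k - Module.finrank ℝ E / 2 : ℝ) := by
    have : (Module.finrank ℝ E : ℝ) < 2 * (k + 1) := by exact_mod_cast hk
    linarith
  have hscaled {τ : ℝ} (hτ : τ ∈ Set.Ioc (0:ℝ) 1) :
      eLpNorm (fun x => ‖τ ^ k • g (τ • x)‖ₑ) 2 (μ.restrict (ball 0 R)) ≤
        ENNReal.ofReal (τ ^ (k - Module.finrank ℝ E / 2 : ℝ)) *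
          eLpNorm g 2 (μ.restrict (ball 0 R)) := by
    have h := eLpNorm_comp_smul_ball_le μ hg 2 R hτ.1 hτ.2
    rw [eLpNorm_enorm, ← Pi.smul_def, eLpNorm_const_smul, sub_eq_add_neg, Real.rpow_add hτ.1,
      Real.rpow_natCast, ENNReal.ofReal_mul (pow_nonneg hτ.1.le k), mul_assoc,
      Real.enorm_of_nonneg (pow_nonneg hτ.1.le k)]
    gcongr
    simpa using h
  calc eLpNorm (radialAvg k g) 2 (μ.restrict (ball 0 R))
      ≤ eLpNorm (fun x => ∫⁻ τ in Set.Ioc (0:ℝ) 1, ‖τ ^ k • g (τ • x)‖ₑ) 2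
          (μ.restrict (ball 0 R)) := by
        refine eLpNorm_mono_enorm fun x => ?_
        rw [radialAvg, intervalIntegral.integral_of_le zero_le_one, enorm_eq_self]
        exact enorm_integral_le_lintegral_enorm _
    _ ≤ ∫⁻ τ in Set.Ioc (0:ℝ) 1,
          eLpNorm (fun x => ‖τ ^ k • g (τ • x)‖ₑ) 2 (μ.restrict (ball 0 R)) :=
        eLpNorm_two_lintegral_le (Continuous.measurable (by fun_prop))
    _ ≤ ∫⁻ τ in Set.Ioc (0:ℝ) 1, ENNReal.ofReal (τ ^ (k - Module.finrank ℝ E / 2 : ℝ)) *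
          eLpNorm g 2 (μ.restrict (ball 0 R)) :=
        setLIntegral_mono' measurableSet_Ioc fun τ hτ => hscaled hτ
    _ = _ := by
      rw [lintegral_mul_const _ (by fun_prop), lintegral_rpow_Ioc_zero_one ha]

end Dilation

section UniformlyLocal

variable {E F : Type*} [NormedAddCommGroup E] [MeasurableSpace E] [BorelSpace E]
  (μ : Measure E) [NormedAddCommGroup F]

-- Integrate `f y` over the pairs with `dist y x < r` and `‖x‖ < R + r`, in both orders.
lemma measure_ball_mul_setLIntegral_le [SecondCountableTopology E] [SFinite μ]
    [μ.IsAddLeftInvariant] {f : E → ℝ≥0∞} (hf : Measurable f) (R r : ℝ) :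
    μ (ball 0 r) * ∫⁻ y in ball 0 R, f y ∂μ ≤
      μ (ball 0 (R + r)) * ⨆ x, ∫⁻ y in ball x r, f y ∂μ := by
  let h : E → E → ℝ≥0∞ := fun x y => (ball x r).indicator f y
  have hh : Measurable (Function.uncurry h) :=
    (hf.comp measurable_snd).indicator (s := {z : E × E | dist z.2 z.1 < r})
      (measurableSet_lt (measurable_snd.dist measurable_fst) measurable_const)
  have hμ (y : E) : μ (ball y r) = μ (ball 0 r) := by
    simpa using (measure_preimage_add μ (-y) (ball 0 r))
  have hball (y : E) (hy : y ∈ ball (0 : E) R) :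
      ∫⁻ x in ball (0 : E) (R + r), h x y ∂μ = μ (ball 0 r) * f y := by
    have hsub : ball y r ⊆ ball (0 : E) (R + r) :=
      ball_subset_ball' (by linarith [mem_ball.1 hy])
    have heq : (fun x => h x y) = (ball y r).indicator fun _ => f y := by
      funext x
      simp [h, Set.indicator, dist_comm]
    rw [heq, lintegral_indicator measurableSet_ball, Measure.restrict_restrict measurableSet_ball,
      Set.inter_eq_left.2 hsub, setLIntegral_const, mul_comm, hμ]
  calc μ (ball 0 r) * ∫⁻ y in ball 0 R, f y ∂μ
      = ∫⁻ y in ball 0 R, ∫⁻ x in ball 0 (R + r), h x y ∂μ ∂μ := by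
        rw [← lintegral_const_mul _ hf]
        exact setLIntegral_congr_fun measurableSet_ball fun y hy => (hball y hy).symm
    _ ≤ ∫⁻ y, ∫⁻ x in ball 0 (R + r), h x y ∂μ ∂μ := setLIntegral_le_lintegral _ _
    _ = ∫⁻ x in ball 0 (R + r), ∫⁻ y, h x y ∂μ ∂μ :=
        (lintegral_lintegral_swap hh.aemeasurable).symm
    _ ≤ ∫⁻ _ in ball 0 (R + r), (⨆ x, ∫⁻ y in ball x r, f y ∂μ) ∂μ :=
        lintegral_mono fun x => by
          simp only [h, lintegral_indicator measurableSet_ball]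
          exact le_iSup (fun x => ∫⁻ y in ball x r, f y ∂μ) x
    _ = _ := by rw [setLIntegral_const, mul_comm]

variable [NormedSpace ℝ E] [FiniteDimensional ℝ E] [μ.IsAddHaarMeasure]

lemma setLIntegral_ball_le {f : E → ℝ≥0∞} (hf : Measurable f) {R : ℝ} (hR : -1 < R) :
    ∫⁻ y in ball 0 R, f y ∂μ ≤
      ENNReal.ofReal ((R + 1) ^ Module.finrank ℝ E) * ⨆ x, ∫⁻ y in ball x 1, f y ∂μ := by
  have hV0 : μ (ball 0 1) ≠ 0 := (measure_ball_pos μ _ one_pos).ne'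
  rw [← ENNReal.mul_le_mul_iff_right hV0 measure_ball_lt_top.ne]
  refine (measure_ball_mul_setLIntegral_le μ hf R 1).trans_eq ?_
  rw [Measure.addHaar_ball_of_pos μ 0 (by linarith), mul_comm (ENNReal.ofReal _), mul_assoc]

lemma eLpNorm_ball_le {g : E → F} (hg : Continuous g) {p : ℝ≥0∞} (hp0 : p ≠ 0) (hp : p ≠ ⊤)
    {R : ℝ} (hR : -1 < R) :
    eLpNorm g p (μ.restrict (ball 0 R)) ≤
      ENNReal.ofReal ((R + 1) ^ (Module.finrank ℝ E / p.toReal)) *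
        ⨆ x, eLpNorm g p (μ.restrict (ball x 1)) := by
  have hp' : 0 < p.toReal := ENNReal.toReal_pos hp0 hp
  have hR' : 0 < R + 1 := by linarith
  have hsup : (⨆ x, ∫⁻ y in ball x 1, ‖g y‖ₑ ^ p.toReal ∂μ) ^ (1 / p.toReal) =
      ⨆ x, eLpNorm g p (μ.restrict (ball x 1)) := by
    simp_rw [eLpNorm_eq_lintegral_rpow_enorm_toReal hp0 hp]
    exact (ENNReal.orderIsoRpow (1 / p.toReal) (by positivity)).map_iSup _
  calc eLpNorm g p (μ.restrict (ball 0 R))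
      ≤ (ENNReal.ofReal ((R + 1) ^ Module.finrank ℝ E) *
          ⨆ x, ∫⁻ y in ball x 1, ‖g y‖ₑ ^ p.toReal ∂μ) ^ (1 / p.toReal) := by
        rw [eLpNorm_eq_lintegral_rpow_enorm_toReal hp0 hp]
        gcongr
        exact setLIntegral_ball_le μ (hg.enorm.measurable.pow_const _) hR
    _ = _ := by
      rw [ENNReal.mul_rpow_of_nonneg _ _ (by positivity), hsup,
        ENNReal.ofReal_rpow_of_pos (by positivity), ← Real.rpow_natCast,
        ← Real.rpow_mul hR'.le, mul_one_div]

end UniformlyLocal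

section PartialDerivatives

lemma opNorm_le_sum_orthonormalBasis {ι κ E F : Type*} [Fintype ι] [Fintype κ] [DecidableEq κ]
    [NormedAddCommGroup E] [InnerProductSpace ℝ E] [NormedAddCommGroup F] [NormedSpace ℝ F]
    (b : OrthonormalBasis ι ℝ E) (m : ContinuousMultilinearMap ℝ (fun _ : κ => E) F) :
    ‖m‖ ≤ ∑ r : κ → ι, ‖m fun j => b (r j)‖ := by
  refine m.opNorm_le_bound (Finset.sum_nonneg fun _ _ => norm_nonneg _) fun v => ?_
  have hexpand : m v = ∑ r : κ → ι, (∏ j, b.repr (v j) (r j)) • m fun j => b (r j) := by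
    conv_lhs => rw [funext fun j => (b.sum_repr (v j)).symm]
    rw [m.map_sum]
    exact Finset.sum_congr rfl fun r _ => m.map_smul_univ _ _
  rw [hexpand, Finset.sum_mul]
  refine (norm_sum_le _ _).trans (Finset.sum_le_sum fun r _ => ?_)
  rw [norm_smul, mul_comm, norm_prod]
  gcongr with j
  exact (PiLp.norm_apply_le _ _).trans_eq (b.repr.norm_map _)

variable {F : Type*} [NormedAddCommGroup F] [NormedSpace ℝ F]

lemma contDiff_pd {m n : WithTop ℕ∞} {f : E3 → F} (hf : ContDiff ℝ n f) (hmn : m + 1 ≤ n)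
    (i : Fin 3) : ContDiff ℝ m (pd i f) :=
  (hf.fderiv_right hmn).clm_apply contDiff_const

lemma contDiff_iterate_pd {m n : ℕ} {f : E3 → F} (hf : ContDiff ℝ (m + n : ℕ) f) (i : Fin 3) :
    ContDiff ℝ m ((pd i)^[n] f) := by
  induction n generalizing f with
  | zero => exact hf
  | succ n ih => exact ih (contDiff_pd hf (by rw [← add_assoc]; rfl) i)

lemma pd_comm {f : E3 → F} (hf : ContDiff ℝ 2 f) (i j : Fin 3) :
    pd i (pd j f) = pd j (pd i f) := by
  have hfderiv : Differentiable ℝ (fderiv ℝ f) :=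
    (hf.fderiv_right (m := 1) (by norm_num)).differentiable one_ne_zero
  have hpd (i j : Fin 3) (x : E3) : pd i (pd j f) x =
      fderiv ℝ (fderiv ℝ f) x (EuclideanSpace.single i 1) (EuclideanSpace.single j 1) := by
    change fderiv ℝ (fun y => fderiv ℝ f y (EuclideanSpace.single j 1)) x _ = _
    rw [fderiv_clm_apply (hfderiv x) (differentiableAt_const _)]
    simp
  funext x
  rw [hpd, hpd]
  exact hf.contDiffAt.isSymmSndFDerivAt (by simp) _ _

lemma pd_iterate_pd {n : ℕ} {f : E3 → F} (hf : ContDiff ℝ (n + 1 : ℕ) f) (i j : Fin 3) :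
    pd i ((pd j)^[n] f) = (pd j)^[n] (pd i f) := by
  induction n generalizing f with
  | zero => rfl
  | succ n ih =>
    rw [Function.iterate_succ_apply, Function.iterate_succ_apply, ih (contDiff_pd hf le_rfl j),
      pd_comm (hf.of_le (by norm_cast; omega))]

lemma Dm_eq (α : Fin 3 → ℕ) (f : E3 → F) :
    Dm α f = (pd 0)^[α 0] ((pd 1)^[α 1] ((pd 2)^[α 2] f)) := rfl

lemma pd_Dm {α : Fin 3 → ℕ} {f : E3 → F} (hf : ContDiff ℝ (∑ i, α i + 1 : ℕ) f) (i : Fin 3) :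
    pd i (Dm α f) = Dm (Pi.single i 1 + α) f := by
  rw [Fin.sum_univ_three] at hf
  have h2 : ContDiff ℝ (1 + α 0 + α 1 : ℕ) ((pd 2)^[α 2] f) :=
    contDiff_iterate_pd (by convert hf using 2; ring) 2
  have h1 : ContDiff ℝ (1 + α 0 : ℕ) ((pd 1)^[α 1] ((pd 2)^[α 2] f)) :=
    contDiff_iterate_pd h2 1
  have h2' : ContDiff ℝ (α 1 + 1 : ℕ) ((pd 2)^[α 2] f) := h2.of_le (by norm_cast; omega)
  rw [add_comm 1] at h1
  fin_cases i
  · simp [Dm_eq, add_comm 1, Function.iterate_succ_apply']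
  · simp [Dm_eq, add_comm 1, Function.iterate_succ_apply', pd_iterate_pd h1]
  · simp [Dm_eq, add_comm 1, Function.iterate_succ_apply', pd_iterate_pd h1, pd_iterate_pd h2']

lemma sum_apply_sum_single {n : ℕ} (ι : Fin n → Fin 3) :
    ∑ i, (∑ j, Pi.single (ι j) 1 : Fin 3 → ℕ) i = n := by
  simp only [Finset.sum_apply]
  rw [Finset.sum_comm]
  simp

lemma iteratedFDeriv_single {n : ℕ} {f : E3 → F} (hf : ContDiff ℝ n f) (ι : Fin n → Fin 3)
    (x : E3) :
    iteratedFDeriv ℝ n f x (fun j => EuclideanSpace.single (ι j) 1) =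
      Dm (∑ j, Pi.single (ι j) 1) f x := by
  induction n generalizing x with
  | zero => simp [Dm_eq]
  | succ n ih =>
    have hdiff : DifferentiableAt ℝ (iteratedFDeriv ℝ n f) x :=
      hf.differentiable_iteratedFDeriv (by norm_cast; omega) x
    have hprev : (fun y => iteratedFDeriv ℝ n f y fun j => EuclideanSpace.single (ι j.succ) 1) =
        Dm (∑ j : Fin n, Pi.single (ι j.succ) 1) f :=
      funext (ih (hf.of_le (by norm_cast; omega)) fun j => ι j.succ)
    rw [hdiff.iteratedFDeriv_succ_apply_left', Fin.sum_univ_succ,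
      ← pd_Dm ((sum_apply_sum_single _).symm ▸ hf), ← hprev]
    rfl

lemma norm_Dm_le {α : Fin 3 → ℕ} {f : E3 → F} (hf : ContDiff ℝ (∑ i, α i : ℕ) f) (x : E3) :
    ‖Dm α f x‖ ≤ ‖iteratedFDeriv ℝ (∑ i, α i) f x‖ := by
  -- `ι` takes each value `i` exactly `α i` times
  let ι : Fin (∑ i, α i) → Fin 3 := fun j => (finSigmaFinEquiv.symm j).1
  have hα : ∑ j, Pi.single (ι j) 1 = α := by
    rw [finSigmaFinEquiv.symm.sum_comp fun z => (Pi.single z.1 1 : Fin 3 → ℕ), Fintype.sum_sigma]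
    ext i
    simp [Finset.sum_apply, Pi.single_apply]
  have h := (iteratedFDeriv ℝ (∑ i, α i) f x).le_opNorm
    fun j => EuclideanSpace.single (ι j) 1
  rwa [iteratedFDeriv_single hf, hα, Finset.prod_eq_one (by simp), mul_one] at h

lemma norm_iteratedFDeriv_le_sum_Dm {n : ℕ} {f : E3 → F} (hf : ContDiff ℝ n f)
    (x : E3) :
    ‖iteratedFDeriv ℝ n f x‖ ≤
      ∑ ι : Fin n → Fin 3, ‖Dm (∑ j, Pi.single (ι j) 1) f x‖ := by
  simpa [iteratedFDeriv_single hf] using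
    opNorm_le_sum_orthonormalBasis (EuclideanSpace.basisFun (Fin 3) ℝ) (iteratedFDeriv ℝ n f x)

end PartialDerivatives

section StreamFunction

variable {F G : Type*} [NormedAddCommGroup F] [NormedSpace ℝ F] [NormedAddCommGroup G]
  [NormedSpace ℝ G] {s : ℕ} {R : ℝ}

lemma mem_mSet {α : Fin 3 → ℕ} : α ∈ mSet s ↔ ∑ i, α i ≤ s := by
  simp only [mSet, Finset.mem_filter, Finset.mem_Iic, and_iff_right_iff_imp]
  exact fun h i => (Finset.single_le_sum (fun _ _ => Nat.zero_le _) (Finset.mem_univ i)).trans h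

lemma eLpNorm_Dm_ball_le {α : Fin 3 → ℕ} (hα : α ∈ mSet s) {f : E3 → F}
    (hf : Continuous (Dm α f)) (hR : -1 < R) :
    eLpNorm (Dm α f) 2 (volume.restrict (ball 0 R)) ≤
      ENNReal.ofReal ((R + 1) ^ (3 / 2 : ℝ)) * ulSobolev s f := by
  have hlocal := eLpNorm_ball_le volume hf two_ne_zero ENNReal.ofNat_ne_top hR
  simp only [finrank_euclideanSpace, Fintype.card_fin, Nat.cast_ofNat, ENNReal.toReal_ofNat]
    at hlocal
  refine hlocal.trans ?_
  gcongr
  exact Finset.single_le_sum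
    (f := fun α => ⨆ x : E3, eLpNorm (Dm α f) 2 (volume.restrict (ball x 1)))
    (fun _ _ => zero_le) hα

lemma eLpNorm_iteratedFDeriv_ball_le {n : ℕ} (hn : n ≤ s) {f : E3 → F} (hf : ContDiff ℝ n f)
    (hR : -1 < R) :
    eLpNorm (iteratedFDeriv ℝ n f) 2 (volume.restrict (ball 0 R)) ≤
      3 ^ n * (ENNReal.ofReal ((R + 1) ^ (3 / 2 : ℝ)) * ulSobolev s f) := by
  let α (ι : Fin n → Fin 3) : Fin 3 → ℕ := ∑ j, Pi.single (ι j) 1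
  have hα (ι : Fin n → Fin 3) : α ι ∈ mSet s := mem_mSet.2 ((sum_apply_sum_single ι).trans_le hn)
  have hcont (ι : Fin n → Fin 3) : Continuous (Dm (α ι) f) := by
    rw [← funext (iteratedFDeriv_single hf ι)]
    exact (hf.continuous_iteratedFDeriv le_rfl).eval_const _
  calc eLpNorm (iteratedFDeriv ℝ n f) 2 (volume.restrict (ball 0 R))
      ≤ eLpNorm (∑ ι, fun x => ‖Dm (α ι) f x‖) 2 (volume.restrict (ball 0 R)) :=
        eLpNorm_mono_real fun x =>
          (norm_iteratedFDeriv_le_sum_Dm hf x).trans_eq (by simp only [Finset.sum_apply, α])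
    _ ≤ ∑ ι, eLpNorm (fun x => ‖Dm (α ι) f x‖) 2 (volume.restrict (ball 0 R)) :=
        eLpNorm_sum_le (fun ι _ => (hcont ι).norm.aestronglyMeasurable) one_le_two
    _ ≤ ∑ _ : Fin n → Fin 3, ENNReal.ofReal ((R + 1) ^ (3 / 2 : ℝ)) * ulSobolev s f :=
        Finset.sum_le_sum fun ι _ => by
          rw [eLpNorm_norm]
          exact eLpNorm_Dm_ball_le (hα ι) (hcont ι) hR
    _ = _ := by simp

lemma eLpNorm_iteratedFDeriv_radialAvg_le [CompleteSpace F] {n k : ℕ} (hn : n ≤ s) (hk : 1 ≤ k)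
    {g : E3 → F} (hg : ContDiff ℝ n g) (hR : -1 < R) :
    eLpNorm (iteratedFDeriv ℝ n (radialAvg k g)) 2 (volume.restrict (ball 0 R)) ≤
      ENNReal.ofReal (2 * 3 ^ s * (R + 1) ^ (3 / 2 : ℝ)) * ulSobolev s g := by
  rw [iteratedFDeriv_radialAvg hg]
  calc _ ≤ _ := eLpNorm_radialAvg_le volume (hg.continuous_iteratedFDeriv le_rfl)
        (by rw [finrank_euclideanSpace, Fintype.card_fin]; omega) R
    _ ≤ 2 * (3 ^ s * (ENNReal.ofReal ((R + 1) ^ (3 / 2 : ℝ)) * ulSobolev s g)) := by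
        gcongr
        · refine (ENNReal.ofReal_le_ofReal ?_).trans_eq (ENNReal.ofReal_ofNat 2)
          have hk' : (1 : ℝ) ≤ (k + n : ℕ) := by exact_mod_cast le_add_right hk
          rw [finrank_euclideanSpace, Fintype.card_fin]
          exact inv_le_of_inv_le₀ two_pos (by push_cast at hk' ⊢; linarith)
        · exact (eLpNorm_iteratedFDeriv_ball_le hn hg hR).trans (by gcongr; norm_num)
    _ = _ := by
        rw [ENNReal.ofReal_mul (by positivity), ENNReal.ofReal_mul zero_le_two,
          ENNReal.ofReal_pow (by norm_num), ENNReal.ofReal_ofNat, ENNReal.ofReal_ofNat]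
        ring

lemma eLpNorm_Dm_bilinear_radialAvg_le [CompleteSpace F] (B : E3 →L[ℝ] F →L[ℝ] G) {k : ℕ}
    (hk : 1 ≤ k) {g : E3 → F} (hg : ContDiff ℝ s g) {α : Fin 3 → ℕ} (hα : α ∈ mSet s)
    (hR : 0 ≤ R) :
    eLpNorm (Dm α fun x => B x (radialAvg k g x)) 2 (volume.restrict (ball 0 R)) ≤
      ENNReal.ofReal (‖B‖ * (R + s) * (2 * 3 ^ s * (R + 1) ^ (3 / 2 : ℝ))) * ulSobolev s g := by
  have hαs : ∑ i, α i ≤ s := mem_mSet.1 hα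
  have hgn {n : ℕ} (hn : n ≤ s) : ContDiff ℝ n g := hg.of_le (by exact_mod_cast hn)
  have hw : ContDiff ℝ (∑ i, α i : ℕ) (radialAvg k g) := contDiff_radialAvg (hgn hαs) k
  calc eLpNorm (Dm α fun x => B x (radialAvg k g x)) 2 (volume.restrict (ball 0 R))
      ≤ eLpNorm (iteratedFDeriv ℝ (∑ i, α i) fun x => B x (radialAvg k g x)) 2
          (volume.restrict (ball 0 R)) :=
        eLpNorm_mono fun x => norm_Dm_le (by fun_prop) x
    _ ≤ ENNReal.ofReal (‖B‖ * R) * eLpNorm (iteratedFDeriv ℝ (∑ i, α i) (radialAvg k g)) 2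
          (volume.restrict (ball 0 R)) + ENNReal.ofReal (‖B‖ * (∑ i, α i : ℕ)) *
          eLpNorm (iteratedFDeriv ℝ (∑ i, α i - 1) (radialAvg k g)) 2
            (volume.restrict (ball 0 R)) :=
        eLpNorm_iteratedFDeriv_bilinear_id_le volume B hw one_le_two hR
    _ ≤ ENNReal.ofReal (‖B‖ * R) *
          (ENNReal.ofReal (2 * 3 ^ s * (R + 1) ^ (3 / 2 : ℝ)) * ulSobolev s g) +
        ENNReal.ofReal (‖B‖ * s) *
          (ENNReal.ofReal (2 * 3 ^ s * (R + 1) ^ (3 / 2 : ℝ)) * ulSobolev s g) := by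
        have hderiv {n : ℕ} (hn : n ≤ s) :=
          eLpNorm_iteratedFDeriv_radialAvg_le hn hk (hgn hn) (neg_one_lt_zero.trans_le hR)
        gcongr
        · exact hderiv hαs
        · exact hderiv ((Nat.sub_le _ _).trans hαs)
    _ = _ := by
        rw [← add_mul, ← ENNReal.ofReal_add (by positivity) (by positivity), ← mul_add,
          ← mul_assoc, ← ENNReal.ofReal_mul (by positivity)]

lemma add_mul_add_one_rpow_le {a : ℝ} (ha : 0 ≤ a) (hR : 1 ≤ R) :
    (R + a) * (R + 1) ^ (3 / 2 : ℝ) ≤ 4 * (1 + a) * R ^ (5 / 2 : ℝ) := by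
  have hR0 : 0 < R := by linarith
  have h2 : (2 : ℝ) ^ (3 / 2 : ℝ) ≤ 4 :=
    (Real.rpow_le_rpow_of_exponent_le one_le_two (by norm_num)).trans_eq
      ((Real.rpow_two 2).trans (by norm_num))
  calc (R + a) * (R + 1) ^ (3 / 2 : ℝ) ≤ ((1 + a) * R) * (2 * R) ^ (3 / 2 : ℝ) := by
        gcongr
        · nlinarith
        · linarith
    _ = 2 ^ (3 / 2 : ℝ) * (1 + a) * (R * R ^ (3 / 2 : ℝ)) := by
        rw [Real.mul_rpow zero_le_two hR0.le]
        ring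
    _ = 2 ^ (3 / 2 : ℝ) * (1 + a) * R ^ (5 / 2 : ℝ) := by
        rw [← Real.rpow_one_add' hR0.le (by norm_num)]
        norm_num
    _ ≤ 4 * (1 + a) * R ^ (5 / 2 : ℝ) := by gcongr

/-- The cross product as a continuous bilinear map. -/
def crossCLM : E3 →L[ℝ] E3 →L[ℝ] E3 :=
  (LinearMap.mk₂ ℝ cross3
    (fun a a' b => by ext i; fin_cases i <;> simp [cross3] <;> ring)
    (fun c a b => by ext i; fin_cases i <;> simp [cross3] <;> ring)
    (fun a b b' => by ext i; fin_cases i <;> simp [cross3] <;> ring)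
    (fun c a b => by ext i; fin_cases i <;> simp [cross3] <;> ring)).toContinuousBilinearMap

lemma crossCLM_apply (a b : E3) : crossCLM a b = cross3 a b := rfl

lemma streamFun_eq {u : E3 → E3} (hu : Continuous u) :
    streamFun u = fun x => (-crossCLM) x (radialAvg 1 u x) := by
  funext x
  rw [map_radialAvg _ hu]
  simp [streamFun, radialAvg, crossCLM_apply]

lemma eLpNorm_Dm_streamFun_le {α : Fin 3 → ℕ} (hα : α ∈ mSet s) {u : E3 → E3}
    (hu : ContDiff ℝ s u) (hR : 1 ≤ R) :
    eLpNorm (Dm α (streamFun u)) 2 (volume.restrict (ball 0 R)) ≤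
      ENNReal.ofReal (8 * 3 ^ s * ‖crossCLM‖ * (1 + s) * R ^ (5 / 2 : ℝ)) * ulSobolev s u := by
  rw [streamFun_eq hu.continuous]
  refine (eLpNorm_Dm_bilinear_radialAvg_le _ le_rfl hu hα (zero_le_one.trans hR)).trans ?_
  gcongr ENNReal.ofReal ?_ * _
  calc ‖-crossCLM‖ * (R + s) * (2 * 3 ^ s * (R + 1) ^ (3 / 2 : ℝ))
      = 2 * 3 ^ s * ‖crossCLM‖ * ((R + s) * (R + 1) ^ (3 / 2 : ℝ)) := by
        rw [norm_neg crossCLM]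
        ring
    _ ≤ 2 * 3 ^ s * ‖crossCLM‖ * (4 * (1 + s) * R ^ (5 / 2 : ℝ)) :=
        mul_le_mul_of_nonneg_left (add_mul_add_one_rpow_le s.cast_nonneg hR) (by positivity)
    _ = _ := by ring

end StreamFunction

theorem stream_function_estimate_general (s : ℕ) :
    ∃ C : ℝ, 0 < C ∧
      ∀ (R : ℝ), 1 ≤ R →
        ∀ u : E3 → E3, ContDiff ℝ s u →
          (∑ α ∈ mSet s,
              eLpNorm (Dm α (streamFun u)) 2 (volume.restrict (ball (0 : E3) R)))
            ≤ ENNReal.ofReal (C * R ^ ((5 : ℝ) / 2)) * ulSobolev s u := by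
  let K : ℝ := 8 * 3 ^ s * ‖crossCLM‖ * (1 + s)
  refine ⟨(mSet s).card * K + 1, by positivity, fun R hR u hu => ?_⟩
  calc _ ≤ (mSet s).card • (ENNReal.ofReal (K * R ^ (5 / 2 : ℝ)) * ulSobolev s u) :=
        Finset.sum_le_card_nsmul _ _ _ fun α hα => eLpNorm_Dm_streamFun_le hα hu hR
    _ = ENNReal.ofReal ((mSet s).card * K * R ^ (5 / 2 : ℝ)) * ulSobolev s u := by
        rw [nsmul_eq_mul, ← mul_assoc, ← ENNReal.ofReal_natCast,
          ← ENNReal.ofReal_mul (by positivity), mul_assoc ((mSet s).card : ℝ)]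
    _ ≤ _ := by
        gcongr
        linarith

/-- **The quantitative estimate (2.13) of Lemma 2.13 of the paper**: the stream
function `ψ` of a smooth divergence-free field `u` with finite `H^s_ul` norm
satisfies `∑_{|α| ≤ s} ‖D^α ψ‖_{L²(B_R(0))} ≤ C R^{5/2} ‖u‖_{H^s_ul}`. -/
theorem stream_function_estimate (s : ℕ) :
    ∃ C : ℝ, 0 < C ∧
      ∀ (R : ℝ), 1 ≤ R →
        ∀ u : E3 → E3, ContDiff ℝ (⊤ : ℕ∞) u → (∀ x, divg u x = 0) →
          ulSobolev s u ≠ ⊤ →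
          (∑ α ∈ mSet s,
              eLpNorm (Dm α (streamFun u)) 2 (volume.restrict (ball (0 : E3) R)))
            ≤ ENNReal.ofReal (C * R ^ ((5 : ℝ) / 2)) * ulSobolev s u :=
  have ⟨C, hC, h⟩ := stream_function_estimate_general s
  ⟨C, hC, fun R hR u hu _ _ => h R hR u (hu.of_le (by exact_mod_cast le_top))⟩
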